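/- For every integer r ≥ 1, every integer i, and every integer n ≥ 1, the generalized cluster variables satisfy the identity X(i+n, 1) · X(i, n) = X(i, n+1) + X(i, n-1) in the field ℚ(x_1,…,x_r). (This is the multiplication formula coming from the non-split triangle with end terms the simple E_{i+n} and the indecomposable E_i[n].) -/

import Mathlib

/-- The ambient field `ℚ(x_1, …, x_r)`, realized as the fraction field of the
polynomial ring over `ℚ` in variables indexed by `ZMod r` (so indices are
automatically read modulo `r`). -/
noncomputable abbrev CyclicField (r : ℕ) : Type :=
  FractionRing (MvPolynomial (ZMod r) ℚ)

/-- The variable `x_i` for `i : ℤ`, with `x_{i+r} = x_i`. -/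
noncomputable def xv (r : ℕ) (i : ℤ) : CyclicField r :=
  algebraMap (MvPolynomial (ZMod r) ℚ) (CyclicField r) (MvPolynomial.X (i : ZMod r))

/-- The generalized cluster variable `X(l, n)` (the image of the indecomposable
nilpotent representation `E_l[n]` under the Caldero–Chapoton map):
`X(l,0) = 1` and, for `n ≥ 1`,
`X(l,n) = x_{l+n}/x_l + Σ_{k=1}^{n-1} (x_{l+n}·x_{l+r-1})/(x_{l+k-1}·x_{l+k}) + x_{l+r-1}/x_{l+n-1}`. -/
noncomputable def Xgcv (r : ℕ) (l : ℤ) : ℕ → CyclicField r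
  | 0 => 1
  | n + 1 =>
      xv r (l + n + 1) / xv r l
        + ∑ k ∈ Finset.Icc 1 n,
            (xv r (l + n + 1) * xv r (l + r - 1)) / (xv r (l + k - 1) * xv r (l + k))
        + xv r (l + r - 1) / xv r (l + n)

/-!
Fix `l` and put `a_n = X(l+n, 1) = (x_{l+n+1} + x_{l+n-1}) / x_{l+n}`. The identity says that
`y_n = X(l, n)` solves the linear recurrence `a_n y_n = y_{n+1} + y_{n-1}`. The definition of `a_n`
makes `u_n = x_{l+n}` a solution, and a sequence `y` is another one as soon as its Casoratian
`u_n y_{n+1} - u_{n+1} y_n` with `u` is constant. For `y_n = X(l, n)` the Casoratian is `x_{l-1}`.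
-/

section GenClusterVar

variable {K : Type*} [Field K]

/-- The generalized cluster variable `X(l, n)` of a sequence `x : ℤ → K` with values in an arbitrary
field, where `x_{l-1}` stands for the `x_{l+r-1}` of the `r`-periodic case. Factoring `x_{l+n}` out
of the defining sum absorbs its last term into the range of summation and makes the formula uniform
in `n`, including `X(l, 0) = 1`. -/
def genClusterVar (x : ℤ → K) (l : ℤ) (n : ℕ) : K :=
  x (l + n) * (1 / x l + ∑ k ∈ Finset.range n, x (l - 1) / (x (l + k) * x (l + k + 1)))

variable {x : ℤ → K}

theorem genClusterVar_zero {l : ℤ} (hl : x l ≠ 0) : genClusterVar x l 0 = 1 := by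
  simp [genClusterVar, hl]

theorem genClusterVar_succ {l : ℤ} {n : ℕ} (hn : x (l + n + 1) ≠ 0) :
    genClusterVar x l (n + 1) =
      x (l + n + 1) / x l
        + ∑ k ∈ Finset.range n, x (l + n + 1) * x (l - 1) / (x (l + k) * x (l + k + 1))
        + x (l - 1) / x (l + n) := by
  have last : x (l + n + 1) * (x (l - 1) / (x (l + n) * x (l + n + 1))) =
      x (l - 1) / x (l + n) := by
    field_simp
  rw [genClusterVar, Nat.cast_succ, ← add_assoc, Finset.sum_range_succ, mul_add, mul_add, last,
    mul_one_div, Finset.mul_sum, ← add_assoc]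
  simp only [mul_div_assoc]

theorem genClusterVar_one {l : ℤ} (hl : x (l + 1) ≠ 0) :
    genClusterVar x l 1 = (x (l + 1) + x (l - 1)) / x l := by
  simpa [add_div] using genClusterVar_succ (n := 0) (by simpa using hl)

theorem genClusterVar_casoratian {l : ℤ} {n : ℕ} (hn : x (l + n) ≠ 0)
    (hn' : x (l + n + 1) ≠ 0) :
    x (l + n) * genClusterVar x l (n + 1) - x (l + n + 1) * genClusterVar x l n = x (l - 1) := by
  rw [genClusterVar, genClusterVar, Nat.cast_succ, ← add_assoc, Finset.sum_range_succ]
  linear_combination mul_div_cancel₀ (x (l - 1)) (mul_ne_zero hn hn')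

theorem stmt0_general (hx : ∀ i, x i ≠ 0) (l : ℤ) {n : ℕ} (hn : 1 ≤ n) :
    genClusterVar x (l + n) 1 * genClusterVar x l n =
      genClusterVar x l (n + 1) + genClusterVar x l (n - 1) := by
  obtain ⟨m, rfl⟩ := Nat.exists_eq_add_of_le' hn
  have lower := genClusterVar_casoratian (l := l) (n := m) (hx _) (hx _)
  have upper := genClusterVar_casoratian (l := l) (n := m + 1) (hx _) (hx _)
  rw [Nat.cast_succ, ← add_assoc] at upper ⊢
  rw [genClusterVar_one (hx _), add_sub_cancel_right, Nat.add_sub_cancel, div_mul_eq_mul_div,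
    div_eq_iff (hx _)]
  linear_combination lower - upper

end GenClusterVar

theorem xv_ne_zero (r : ℕ) (i : ℤ) : xv r i ≠ 0 :=
  IsFractionRing.to_map_ne_zero_of_mem_nonZeroDivisors <|
    mem_nonZeroDivisors_of_ne_zero (MvPolynomial.X_ne_zero _)

theorem xv_add_period (r : ℕ) (i : ℤ) : xv r (i + r) = xv r i := by
  simp [xv]

theorem Xgcv_eq_genClusterVar (r : ℕ) (l : ℤ) (n : ℕ) :
    Xgcv r l n = genClusterVar (xv r) l n := by
  cases n with
  | zero => rw [Xgcv, genClusterVar_zero (xv_ne_zero r l)]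
  | succ n =>
    have period : xv r (l + r - 1) = xv r (l - 1) := by
      rw [add_sub_right_comm, xv_add_period]
    have shift (k : ℕ) : l + (1 + k : ℕ) = l + k + 1 := by
      push_cast
      ring
    rw [Xgcv, genClusterVar_succ (xv_ne_zero r _), period, ← Finset.Ico_add_one_right_eq_Icc,
      Finset.sum_Ico_eq_sum_range, Nat.add_sub_cancel]
    simp only [shift, add_sub_cancel_right]

/-- `X(i+n, 1) · X(i, n) = X(i, n+1) + X(i, n-1)` for `r ≥ 1`, `i ∈ ℤ`, `n ≥ 1`. -/
theorem stmt0 (r : ℕ) (hr : 1 ≤ r) (i : ℤ) (n : ℕ) (hn : 1 ≤ n) :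
    Xgcv r (i + n) 1 * Xgcv r i n = Xgcv r i (n + 1) + Xgcv r i (n - 1) := by
  simpa only [Xgcv_eq_genClusterVar] using stmt0_general (xv_ne_zero r) i hn
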